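/- Fix 1 ≤ a ≤ b. Let 𝔤 ∈ End(ℍ) be homogeneous of bidegree (ℓ, s), and let A = 𝔮_{m_1}(β_1) ⋯ 𝔮_{m_b}(β_b)|0⟩. Then 𝔤(A) equals the sum of: (I) Σ_{i=0}^{a−1} Σ_{σ_i} ± ∏_{ℓ ∈ σ_i^0} 𝔮_{m_ℓ}(β_ℓ) · [⋯[𝔤, 𝔮_{m_{σ_i(1)}}(β_{σ_i(1)})], ⋯], 𝔮_{m_{σ_i(i)}}(β_{σ_i(i)})]|0⟩, with signs determined by the Koszul sign rule when moving the iterated commutators past the operators 𝔮_{m_ℓ}(β_ℓ); and (II) Σ_{σ_a} (−1)^{Σ_{k=0}^{a−1}(s + Σ_{ℓ=1}^{k}|β_{σ_a(ℓ)}|) Σ_{σ_a(k) < j < σ_a(k+1)} |β_j|} · ∏_{ℓ ∈ σ_a^1} 𝔮_{m_ℓ}(β_ℓ) · [⋯[𝔤, 𝔮_{m_{σ_a(1)}}(β_{σ_a(1)})], ⋯], 𝔮_{m_{σ_a(a)}}(β_{σ_a(a)})] · ∏_{ℓ ∈ σ_a^2} 𝔮_{m_ℓ}(β_ℓ)|0⟩.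 Here, for each 0 ≤ i ≤ a, σ_i runs over all strictly increasing maps {1, …, i} → {1, …, b}, σ_i^0 = {ℓ : 1 ≤ ℓ ≤ b, ℓ ∉ im(σ_i)}, σ_a^1 = {ℓ : 1 ≤ ℓ < σ_a(a), ℓ ∉ im(σ_a)}, and σ_a^2 = {ℓ : σ_a(a) < ℓ ≤ b}. -/

import Mathlib

/-!
The identity is purely formal: it only uses `f q = [f, q] + (-1)^{|f||q|} q f`.

Moving `f` rightwards through an ordered product of operators (`mul_prod_expand`) produces one
summand for each factor `q_j`, in which `f` has reached `q_j` and been replaced by `[f, q_j]`, plus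
one summand in which `f` has passed every factor.  The theorem follows by induction on `a`
(`expansion`), as an identity of operators and starting from the trivial case `a = 0`.  Each term
of part (II) for `a` has the shape `± Q₁ F Q₂`, with `F` the iterated bracket along `σ` and `Q₂`
the product of the factors lying after all of `σ`.  Moving `F` through `Q₂` gives the term of
part (I) indexed by `σ` (when `F` passes everything) and the terms of part (II) for `a + 1`
indexed by the extensions of `σ` by one further, larger value `j` (when `F` stops at `q_j`).
The Koszul signs accumulate exactly to the exponent of part (II).
-/


/-!
STATEMENT 8 (Lemma 2.17 = Lemma 5.26 of [LQW]): expansion of `𝔤(A)` for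
`A = 𝔮_{m_1}(β_1) ⋯ 𝔮_{m_b}(β_b)|0⟩` and a homogeneous operator `𝔤` of bidegree `(ℓ, s)`.

We model `ℍ = ⊕_{n,i} ℍ^{n,i}` with `ℍ^{n,i} = H^i(X^[n])` as the direct sum `⨁ n, Hn n` of
abstract ℚ-algebras `Hn n = H^*(X^[n])`, the bigraded pieces `ℍ^{n,i}` being given by submodules
`gr n i ⊆ ⨁ n, Hn n`; `H^*(X; ℚ)` is an abstract ℚ-algebra `HX` with grading `HXgr`, and the
geometrically defined Nakajima operators are `q : ℤ → HX →ₗ[ℚ] Module.End ℚ (⨁ n, Hn n)`;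
`𝔮_m(β)` for `β ∈ H^{d}(X)` has cohomological degree `≡ d (mod 2)`.  Homogeneity of `𝔤` of
bidegree `(ℓ, s)` means `𝔤(ℍ^{n,i}) ⊆ ℍ^{n+ℓ, i+s}` (where the target is zero if `n + ℓ < 0`).
The unspecified signs `±` in part (I) (determined by the Koszul rule when moving the iterated
commutators past the factors `𝔮_{m_ℓ}(β_ℓ)`) are rendered by an existentially quantified family
of signs `ε i σ ∈ {1, −1}`; the sign in part (II) is the explicit one from the statement.
-/

open DirectSum

/-- The vacuum vector `|0⟩ = 1 ∈ H^0(X^[0]) = ℚ`, viewed inside `ℍ = ⨁ n, H^*(X^[n])`. -/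
noncomputable def vacuum (Hn : ℕ → Type) [∀ n, Ring (Hn n)] [∀ n, Algebra ℚ (Hn n)] :
    ⨁ n, Hn n :=
  DirectSum.lof ℚ ℕ (fun n => Hn n) 0 1

/-- The Lie superalgebra bracket `[f, g] = f g − (−1)^{p₁ p₂} g f` of operators `f, g` of
cohomological degrees (parities) `p₁, p₂`. -/
noncomputable def superBracket {M : Type} [AddCommGroup M] [Module ℚ M]
    (p₁ p₂ : ℕ) (f g : Module.End ℚ M) : Module.End ℚ M :=
  f * g - ((-1 : ℚ) ^ (p₁ * p₂)) • (g * f)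

/-- The iterated Lie superalgebra bracket `[⋯[[f₀, g_1], g_2], ⋯], g_k]`, where `f₀` has
cohomological degree `p₀` and `g_j` has cohomological degree `ps j`. -/
noncomputable def iterSuperBracket {M : Type} [AddCommGroup M] [Module ℚ M]
    (p₀ : ℕ) (f₀ : Module.End ℚ M) :
    (k : ℕ) → (ps : Fin k → ℕ) → (gs : Fin k → Module.End ℚ M) → Module.End ℚ M
  | 0, _, _ => f₀
  | k + 1, ps, gs =>
      superBracket (p₀ + ∑ j : Fin k, ps j.castSucc) (ps (Fin.last k))
        (iterSuperBracket p₀ f₀ k (fun j => ps j.castSucc) (fun j => gs j.castSucc))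
        (gs (Fin.last k))

open Classical in
/-- The ordered product `∏_{ℓ ∈ {ℓ : P ℓ}} 𝔮_{m_ℓ}(β_ℓ)` of Nakajima operators over the indices
`ℓ` (in increasing order) satisfying a predicate `P`. -/
noncomputable def qProdOver
    (HX : Type) [Ring HX] [Algebra ℚ HX]
    (Hn : ℕ → Type) [∀ n, Ring (Hn n)] [∀ n, Algebra ℚ (Hn n)]
    (q : ℤ → HX →ₗ[ℚ] Module.End ℚ (⨁ n, Hn n))
    {b : ℕ} (ms : Fin b → ℤ) (βs : Fin b → HX) (P : Fin b → Prop) :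
    Module.End ℚ (⨁ n, Hn n) :=
  (((List.finRange b).filter fun t => decide (P t)).map fun t => q (ms t) (βs t)).prod

open Classical in
/-- The finite set of strictly increasing maps `{1, …, i} → {1, …, b}`. -/
noncomputable def strictMonoMaps (i b : ℕ) : Finset (Fin i → Fin b) :=
  Finset.univ.filter fun σ => StrictMono σ

open Classical in
/-- The exponent `Σ_{k=0}^{a−1} (s + Σ_{ℓ=1}^{k} |β_{σ(ℓ)}|) · Σ_{σ(k) < j < σ(k+1)} |β_j|` of
the sign in part (II); here (in 0-based indexing) the condition `σ(k) < j < σ(k+1)` reads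
`(∀ k' < k, σ(k') < j) ∧ j < σ(k)`. -/
noncomputable def partIIExponent {a b : ℕ} (s : ℕ) (dβ : Fin b → ℕ)
    (σ : Fin a → Fin b) : ℕ :=
  ∑ k : Fin a,
    (s + ∑ t ∈ Finset.univ.filter (· < k), dβ (σ t)) *
      ∑ j ∈ Finset.univ.filter
          (fun j : Fin b => (∀ k' : Fin a, k' < k → σ k' < j) ∧ j < σ k), dβ j

/-- The product of the operators `Q t` over the indices `t` satisfying `P`, in increasing order. -/
noncomputable def prodOver {R : Type} [Monoid R] {b : ℕ} (Q : Fin b → R) (P : Fin b → Prop) : R :=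
  open Classical in (((List.finRange b).filter fun t => decide (P t)).map Q).prod

/-- The indices lying strictly after every value of `σ`; for `a = 0` these are all indices. -/
def After {a b : ℕ} (σ : Fin a → Fin b) (t : Fin b) : Prop := ∀ k, σ k < t

/-- The indices outside the image of `σ` lying before some value of `σ`; for increasing `σ` this
means before the last value. -/
def Before {a b : ℕ} (σ : Fin a → Fin b) (t : Fin b) : Prop := (∃ k, t < σ k) ∧ t ∉ Set.range σ

open Classical in
/-- If every index satisfying `P` precedes every index satisfying `T`, the ordered products over
`P` and `T` concatenate to the ordered product over `P ∨ T`. -/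
lemma prodOver_mul {R : Type} [Monoid R] {b : ℕ} (Q : Fin b → R) (P T S : Fin b → Prop)
    (h : ∀ t t', P t → T t' → t < t') (hS : ∀ t, S t ↔ P t ∨ T t) :
    prodOver Q P * prodOver Q T = prodOver Q S := by
  unfold prodOver
  rw [← List.prod_append, ← List.map_append]
  congr 2
  have key : ∀ L : List (Fin b), L.Pairwise (· < ·) →
      L.filter (fun t => decide (P t)) ++ L.filter (fun t => decide (T t)) =
        L.filter (fun t => decide (S t)) := by
    intro L hL
    induction L with
    | nil => simp
    | cons x L ih =>
      rw [List.pairwise_cons] at hL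
      have ih' := ih hL.2
      by_cases hx : P x
      · have hT : ¬ T x := fun h' => lt_irrefl _ (h x x hx h')
        have hSx : S x := (hS x).2 (Or.inl hx)
        simp [hx, hT, hSx, ih']
      · by_cases hT : T x
        · have hSx : S x := (hS x).2 (Or.inr hT)
          -- everything in `L` comes after `x`, so nothing in `L` satisfies `P`
          have hn : L.filter (fun t => decide (P t)) = [] := by
            rw [List.filter_eq_nil_iff]
            intro t ht hP
            exact lt_asymm (hL.1 t ht) (h t x (by simpa using hP) hT)
          rw [hn, List.nil_append] at ih'
          simp [hx, hT, hSx, hn, ih']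
        · have hSx : ¬ S x := fun h' => ((hS x).1 h').elim hx hT
          simp [hx, hT, hSx, ih']
  exact key _ (List.pairwise_lt_finRange b)

lemma mul_eq_superBracket_add {M : Type} [AddCommGroup M] [Module ℚ M]
    (p₁ p₂ : ℕ) (f g : Module.End ℚ M) :
    f * g = superBracket p₁ p₂ f g + ((-1 : ℚ) ^ (p₁ * p₂)) • (g * f) := by
  simp [superBracket]

/-- Moving `f` of degree `p` through an ordered product indexed by an increasing list. -/
lemma mul_list_prod_expand {M : Type} [AddCommGroup M] [Module ℚ M] {b : ℕ}
    (Q : Fin b → Module.End ℚ M) (d : Fin b → ℕ) (p : ℕ) (f : Module.End ℚ M)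
    (L : List (Fin b)) (hL : L.Pairwise (· < ·)) :
    f * (L.map Q).prod =
      (L.map fun j => ((-1 : ℚ) ^ (p * ((L.filter fun t => decide (t < j)).map d).sum)) •
        (((L.filter fun t => decide (t < j)).map Q).prod * superBracket p (d j) f (Q j) *
          ((L.filter fun t => decide (j < t)).map Q).prod)).sum +
      ((-1 : ℚ) ^ (p * (L.map d).sum)) • ((L.map Q).prod * f) := by
  induction L with
  | nil => simp
  | cons x L ih =>
    rw [List.pairwise_cons] at hL
    have h1 : L.filter (fun t => decide (t < x)) = [] := by
      rw [List.filter_eq_nil_iff]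
      intro t ht
      simpa using (hL.1 t ht).le
    have h2 : L.filter (fun t => decide (x < t)) = L := by
      rw [List.filter_eq_self]
      intro t ht
      simpa using hL.1 t ht
    have h3 : (L.map fun j =>
        ((-1 : ℚ) ^ (p * (((x :: L).filter fun t => decide (t < j)).map d).sum)) •
        ((((x :: L).filter fun t => decide (t < j)).map Q).prod * superBracket p (d j) f (Q j) *
          (((x :: L).filter fun t => decide (j < t)).map Q).prod)).sum =
        ((-1 : ℚ) ^ (p * d x)) • (Q x * (L.map fun j =>
        ((-1 : ℚ) ^ (p * ((L.filter fun t => decide (t < j)).map d).sum)) •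
        (((L.filter fun t => decide (t < j)).map Q).prod * superBracket p (d j) f (Q j) *
          ((L.filter fun t => decide (j < t)).map Q).prod)).sum) := by
      rw [← List.sum_map_mul_left, List.smul_sum, List.map_map]
      congr 1
      apply List.map_congr_left
      intro j hj
      have hxj := hL.1 j hj
      have hjx : ¬ j < x := lt_asymm hxj
      simp [hxj, hjx, mul_add, pow_add, smul_smul, mul_assoc]
    rw [List.map_cons, List.map_cons, List.sum_cons, h3, List.prod_cons, ← mul_assoc,
      mul_eq_superBracket_add p (d x) f (Q x), add_mul, smul_mul_assoc, mul_assoc (Q x) f,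
      ih hL.2]
    simp [h1, h2, mul_add, pow_add, smul_smul, mul_assoc, add_assoc]

open Classical in
/-- Moving `f` of degree `p` through the ordered product over the indices satisfying `P`. -/
lemma mul_prod_expand {M : Type} [AddCommGroup M] [Module ℚ M] {b : ℕ}
    (Q : Fin b → Module.End ℚ M) (d : Fin b → ℕ) (p : ℕ) (f : Module.End ℚ M)
    (P : Fin b → Prop) :
    f * prodOver Q P =
      ∑ j ∈ Finset.univ.filter P,
        ((-1 : ℚ) ^ (p * ∑ t ∈ Finset.univ.filter (fun t => P t ∧ t < j), d t)) •
        (prodOver Q (fun t => P t ∧ t < j) * superBracket p (d j) f (Q j) *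
          prodOver Q (fun t => P t ∧ j < t)) +
      ((-1 : ℚ) ^ (p * ∑ t ∈ Finset.univ.filter P, d t)) • (prodOver Q P * f) := by
  have hsum : ∀ {A : Type} [AddCommMonoid A] (S : Fin b → Prop) (F : Fin b → A),
      (((List.finRange b).filter fun t => decide (S t)).map F).sum =
        ∑ t ∈ Finset.univ.filter S, F t := by
    intro A _ S F
    rw [← List.sum_toFinset F ((List.nodup_finRange b).filter _)]
    congr 1
    ext t
    simp
  have hff : ∀ S : Fin b → Prop, ∀ (S' : Fin b → Prop) [DecidablePred S'],
      ((List.finRange b).filter fun t => decide (S t)).filter (fun t => decide (S' t)) =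
        (List.finRange b).filter fun t => @decide (S t ∧ S' t) (Classical.propDecidable _) := by
    intro S S' _
    rw [List.filter_filter]
    congr 1
    ext t
    simp [Bool.and_comm]
  have h := mul_list_prod_expand Q d p f _
    ((List.pairwise_lt_finRange b).filter fun t => decide (P t))
  unfold prodOver
  rw [h, hsum, hsum]
  congr 1
  apply Finset.sum_congr rfl
  intro j _
  rw [hff, hff, hsum]
  congr!

lemma strictMono_snoc_iff {a b : ℕ} (σ : Fin a → Fin b) (j : Fin b) :
    StrictMono (Fin.snoc σ j : Fin (a + 1) → Fin b) ↔ StrictMono σ ∧ After σ j := by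
  constructor
  · intro h
    refine ⟨fun x y hxy => ?_, fun k => ?_⟩
    · simpa using h (Fin.castSucc_lt_castSucc_iff.mpr hxy)
    · simpa using h (Fin.castSucc_lt_last k)
  · rintro ⟨h, hj⟩ x y hxy
    induction y using Fin.lastCases with
    | last =>
      induction x using Fin.lastCases with
      | last => exact absurd hxy (lt_irrefl _)
      | cast x => simpa using hj x
    | cast y =>
      induction x using Fin.lastCases with
      | last => exact absurd hxy (not_lt.mpr (Fin.le_last _))
      | cast x => simpa using h (Fin.castSucc_lt_castSucc_iff.mp hxy)

open Classical in
/-- Strictly increasing maps on `a + 1` points are the extensions of strictly increasing maps `σ`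
on `a` points by a value `j` lying after all of `σ`. -/
lemma sum_strictMonoMaps_succ {A : Type} [AddCommMonoid A] {a b : ℕ}
    (F : (Fin (a + 1) → Fin b) → A) :
    ∑ σ ∈ strictMonoMaps (a + 1) b, F σ =
      ∑ σ ∈ strictMonoMaps a b, ∑ j ∈ Finset.univ.filter (After σ), F (Fin.snoc σ j) := by
  rw [Finset.sum_sigma']
  refine Finset.sum_bij' (fun σ _ => ⟨Fin.init σ, σ (Fin.last a)⟩)
    (fun x _ => Fin.snoc x.1 x.2) ?_ ?_ ?_ ?_ ?_
  · intro σ hσ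
    have h : StrictMono (Fin.snoc (Fin.init σ) (σ (Fin.last a)) : Fin (a + 1) → Fin b) := by
      rw [Fin.snoc_init_self]
      simpa [strictMonoMaps] using hσ
    rw [strictMono_snoc_iff] at h
    simpa [strictMonoMaps] using h
  · rintro ⟨σ, j⟩ h
    simpa [strictMonoMaps, strictMono_snoc_iff] using h
  · intro σ _
    simp
  · rintro ⟨σ, j⟩ _
    simp
  · intro σ _
    simp

open Classical in
/-- Extending `σ` by `j` adds to the exponent of part (II) the Koszul sign of moving the iterated
bracket along `σ` past the factors strictly between the last value of `σ` and `j`. -/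
lemma partIIExponent_snoc {a b : ℕ} (s : ℕ) (d : Fin b → ℕ) (σ : Fin a → Fin b) (j : Fin b) :
    partIIExponent s d (Fin.snoc σ j : Fin (a + 1) → Fin b) =
      partIIExponent s d σ +
        (s + ∑ k, d (σ k)) * ∑ t ∈ Finset.univ.filter (fun t => After σ t ∧ t < j), d t := by
  unfold partIIExponent
  rw [Fin.sum_univ_castSucc]
  congr 1
  · apply Finset.sum_congr rfl
    intro k _
    congr 2
    · rw [Finset.sum_filter, Finset.sum_filter, Fin.sum_univ_castSucc]
      simp [Fin.castSucc_lt_castSucc_iff, not_lt.mpr (Fin.le_last _)]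
    · ext t
      simp [Fin.forall_fin_succ', not_lt.mpr (Fin.le_last _)]
  · congr 2
    · rw [Finset.sum_filter, Fin.sum_univ_castSucc]
      simp [Fin.castSucc_lt_last]
    · ext t
      simp only [Finset.mem_filter, Finset.mem_univ, true_and]
      simp [Fin.forall_fin_succ', After, Fin.castSucc_lt_last]

lemma iterSuperBracket_snoc {M : Type} [AddCommGroup M] [Module ℚ M] {a b : ℕ}
    (s : ℕ) (g : Module.End ℚ M) (Q : Fin b → Module.End ℚ M) (d : Fin b → ℕ)
    (σ : Fin a → Fin b) (j : Fin b) :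
    iterSuperBracket s g (a + 1)
        (fun k => d ((Fin.snoc σ j : Fin (a + 1) → Fin b) k))
        (fun k => Q ((Fin.snoc σ j : Fin (a + 1) → Fin b) k)) =
      superBracket (s + ∑ k, d (σ k)) (d j)
        (iterSuperBracket s g a (fun k => d (σ k)) (fun k => Q (σ k))) (Q j) := by
  simp [iterSuperBracket]

open Classical in
/-- The exponent of the Koszul sign of the term of part (I) indexed by `σ`: the part (II) exponent,
plus the contribution of moving the iterated bracket past all factors after `σ`. -/
noncomputable def partIExponent {a b : ℕ} (s : ℕ) (d : Fin b → ℕ) (σ : Fin a → Fin b) : ℕ :=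
  partIIExponent s d σ + (s + ∑ k, d (σ k)) * ∑ t ∈ Finset.univ.filter (After σ), d t

/-- The expansion as an identity of operators, valid for every `a ≥ 0`. -/
lemma expansion {M : Type} [AddCommGroup M] [Module ℚ M] {b : ℕ}
    (Q : Fin b → Module.End ℚ M) (d : Fin b → ℕ) (s : ℕ) (g : Module.End ℚ M) (a : ℕ) :
    g * (List.ofFn Q).prod =
      (∑ i ∈ Finset.range a, ∑ σ ∈ strictMonoMaps i b, ((-1 : ℚ) ^ partIExponent s d σ) •
        (prodOver Q (fun t => t ∉ Set.range σ) *
          iterSuperBracket s g i (fun k => d (σ k)) (fun k => Q (σ k)))) +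
      ∑ σ ∈ strictMonoMaps a b, ((-1 : ℚ) ^ partIIExponent s d σ) •
        (prodOver Q (Before σ) *
          iterSuperBracket s g a (fun k => d (σ k)) (fun k => Q (σ k)) *
          prodOver Q (After σ)) := by
  classical
  induction a with
  | zero =>
    have h : strictMonoMaps 0 b = Finset.univ := by
      ext σ
      simp [strictMonoMaps, Subsingleton.strictMono]
    simp [h, prodOver, Before, After, iterSuperBracket, partIIExponent, List.ofFn_eq_map]
  | succ a ih =>
    rw [ih, Finset.sum_range_succ, add_assoc, sum_strictMonoMaps_succ,
      ← Finset.sum_add_distrib]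
    congr 1
    apply Finset.sum_congr rfl
    intro σ hσ
    rw [mul_assoc, mul_prod_expand Q d (s + ∑ k, d (σ k)), mul_add, smul_add, add_comm]
    congr 1
    · rw [mul_smul_comm, smul_smul, ← pow_add, ← mul_assoc,
        prodOver_mul Q (Before σ) (After σ) (fun t => t ∉ Set.range σ)]
      · rfl
      · rintro t t' ⟨⟨k, hk⟩, _⟩ ht'
        exact hk.trans (ht' k)
      · intro t
        constructor
        · intro ht
          by_cases h : ∃ k, t < σ k
          · exact Or.inl ⟨h, ht⟩
          · push Not at h
            exact Or.inr fun k => lt_of_le_of_ne (h k) fun e => ht ⟨k, e⟩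
        · rintro (h | h)
          · exact h.2
          · rintro ⟨k, rfl⟩
            exact lt_irrefl _ (h k)
    · rw [Finset.mul_sum, Finset.smul_sum]
      apply Finset.sum_congr rfl
      intro j hj
      have hj' : After σ j := by simpa using hj
      have hafter : (fun t => After σ t ∧ j < t) =
          After (Fin.snoc σ j : Fin (a + 1) → Fin b) := by
        ext t
        simp [After, Fin.forall_fin_succ']
      have hbefore : prodOver Q (Before σ) * prodOver Q (fun t => After σ t ∧ t < j) =
          prodOver Q (Before (Fin.snoc σ j : Fin (a + 1) → Fin b)) := by
        apply prodOver_mul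
        · rintro t t' ⟨⟨k, hk⟩, _⟩ ⟨ht', _⟩
          exact hk.trans (ht' k)
        · intro t
          simp only [Before, After, Set.mem_range, Fin.exists_fin_succ', Fin.snoc_castSucc,
            Fin.snoc_last]
          constructor
          · rintro ⟨h, hn⟩
            rw [not_or, not_exists] at hn
            by_cases h' : ∃ k, t < σ k
            · exact Or.inl ⟨h', fun ⟨k, hk⟩ => hn.1 k hk⟩
            · have ht : t < j := h.resolve_left h'
              push Not at h'
              exact Or.inr ⟨fun k => lt_of_le_of_ne (h' k) (hn.1 k), ht⟩
          · rintro (⟨⟨k, hk⟩, hn⟩ | ⟨h, ht⟩)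
            · refine ⟨Or.inl ⟨k, hk⟩, ?_⟩
              rintro (h | h)
              · exact hn h
              · exact lt_asymm (hk.trans (hj' k)) (h ▸ hk.trans (hj' k))
            · refine ⟨Or.inr ht, ?_⟩
              rintro (⟨k, hk⟩ | h')
              · exact (h k).ne hk
              · exact ht.ne h'.symm
      rw [iterSuperBracket_snoc, partIIExponent_snoc, ← hafter, ← hbefore, mul_smul_comm,
        smul_smul, ← pow_add]
      simp only [mul_assoc]

/-- **Lemma 2.17 (Lemma 5.26 of [LQW]).** -/
theorem operator_applied_to_heisenberg_monomial
    (HX : Type) [Ring HX] [Algebra ℚ HX] (HXgr : ℕ → Submodule ℚ HX)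
    (Hn : ℕ → Type) [∀ n, Ring (Hn n)] [∀ n, Algebra ℚ (Hn n)]
    (gr : ℕ → ℕ → Submodule ℚ (⨁ n, Hn n))
    (q : ℤ → HX →ₗ[ℚ] Module.End ℚ (⨁ n, Hn n))
    (a b : ℕ) (ha : 1 ≤ a) (hab : a ≤ b)
    (g : Module.End ℚ (⨁ n, Hn n)) (l : ℤ) (s : ℕ)
    (hg : ∀ (n i : ℕ), ∀ x ∈ gr n i,
      if 0 ≤ (n : ℤ) + l then g x ∈ gr ((n : ℤ) + l).toNat (i + s) else g x = 0)
    (ms : Fin b → ℤ) (βs : Fin b → HX) (dβ : Fin b → ℕ)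
    (hβ : ∀ j, βs j ∈ HXgr (dβ j)) :
    ∃ ε : (i : ℕ) → (Fin i → Fin b) → ℚ,
      (∀ i σ, ε i σ = 1 ∨ ε i σ = -1) ∧
      g ((List.ofFn fun j => q (ms j) (βs j)).prod (vacuum Hn)) =
        (∑ i ∈ Finset.range a, ∑ σ ∈ strictMonoMaps i b,
          ε i σ •
            ((qProdOver HX Hn q ms βs (fun t => t ∉ Set.range σ) *
              iterSuperBracket s g i (fun j => dβ (σ j))
                (fun j => q (ms (σ j)) (βs (σ j)))) (vacuum Hn))) +
        ∑ σ ∈ strictMonoMaps a b,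
          ((-1 : ℚ) ^ partIIExponent s dβ σ) •
            ((qProdOver HX Hn q ms βs
                (fun t => t < σ ⟨a - 1, by omega⟩ ∧ t ∉ Set.range σ) *
              iterSuperBracket s g a (fun j => dβ (σ j))
                (fun j => q (ms (σ j)) (βs (σ j))) *
              qProdOver HX Hn q ms βs (fun t => σ ⟨a - 1, by omega⟩ < t))
              (vacuum Hn)) := by
  refine ⟨fun i σ => (-1 : ℚ) ^ partIExponent s dβ σ, fun i σ => neg_one_pow_eq_or ℚ _, ?_⟩
  have h := congrArg (fun T : Module.End ℚ (⨁ n, Hn n) => T (vacuum Hn))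
    (expansion (fun j => q (ms j) (βs j)) dβ s g a)
  simp only [LinearMap.add_apply, LinearMap.sum_apply, LinearMap.smul_apply] at h
  rw [Module.End.mul_apply] at h
  rw [h]
  congr 1
  apply Finset.sum_congr rfl
  intro σ hσ
  have hmono : StrictMono σ := by simpa [strictMonoMaps] using hσ
  have hle : ∀ k, σ k ≤ σ ⟨a - 1, by omega⟩ := fun k =>
    hmono.monotone (Fin.mk_le_mk.mpr (by omega : k.1 ≤ a - 1))
  have hbefore : (fun t => t < σ ⟨a - 1, by omega⟩ ∧ t ∉ Set.range σ) = Before σ := by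
    ext t
    exact and_congr_left fun _ => ⟨fun h => ⟨_, h⟩, fun ⟨k, hk⟩ => hk.trans_le (hle k)⟩
  have hafter : (fun t => σ ⟨a - 1, by omega⟩ < t) = After σ := by
    ext t
    exact ⟨fun h k => (hle k).trans_lt h, fun h => h _⟩
  rw [hbefore, hafter]
  rfl
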